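/- Let $m\ge 1$ be an integer, $M=\{1,\dots,m\}$, let $h_1\ge h_2\ge\dots\ge h_m\ge 0$ be reals, let $\pi_1,\dots,\pi_m>0$ with $\sum_{i=1}^m\pi_i=1$, and let $\varepsilon\in[0,1)$ with $\pi_i\le\varepsilon$ for all $i\in M$. Put $p=\max\{k\in M:\sum_{i=1}^k\pi_i\le\varepsilon\}$ and $F_j=\sum_{i=1}^j\pi_i$ for $j\in M$. Let $$\mathcal F_c=\Big\{(z,x)\in\mathbb R_{\ge0}\times\{0,1\}^m:\ x_i=0\Rightarrow z\ge h_i\ (i\in M),\ \sum_{i=1}^m\pi_ix_i\le\varepsilon\Big\},$$ and let $\mathcal S_c$ be the set of all $(z,x;y)$ with $z\ge 0$, $x\in[0,1]^m$, $\sum_{i=1}^m\pi_ix_i\le\varepsilon$, $y\in\mathbb Z_{\ge0}^m$, $\sum_{i=1}^m y_i\le1$, and $$(1-x_i)\Big(1-\sum_{k=1}^m y_k\Big)=0,\quad zy_i-h_iy_i\ge0,\quad -x_iy_i\ge0\quad(i\in M),\qquad -(1-x_i)y_j\ge0\quad(i,j\in M,\ i<j).$$ Let $r\in\{1,\dots,p\}$,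 $l\in\{1,\dots,r\}$, $L=\{1,\dots,l\}$, and let $1\le t_1<\dots<t_l\le r$, with the convention $t_{l+1}:=r+1$. Let $v\in\{1,\dots,p-r+l\}$, $V=\{1,\dots,v\}$, and let $r+1\le q_1<\dots<q_v\le m$. Let $\delta_{t_\iota}\in\mathbb R$ for $\iota\in L$ satisfy $\delta_{t_\iota}\ge h_{t_{\iota+1}}-h_{t_\iota}$ for every $\iota\in L$ and $\sum_{\iota\in L}\delta_{t_\iota}\le h_{r+1}$. For $j\in M$ let $a_j=|\{\iota\in L:t_\iota<j\}|$ and choose a subset $A_j\subseteq V$. Suppose there exist nonnegative reals $\phi_{q_1},\dots,\phi_{q_v}$ and, for each $j\in M$, a nonnegative real $\beta_j$ such that for every $j\in M$: (i) $\phi_{q_\iota}\le m\,\pi_{q_\iota}\beta_j$ for every $\iota\in A_j$ with $q_\iota>j$, and $m\,\pi_{q_\iota}\beta_j\le\phi_{q_\iota}$ for every $\iota\in V\setminus A_j$ with $q_\iota>j$; and (ii) $$\beta_j\Big(F_j-\pi_j-\varepsilon+\sum_{\iota\in V:\,q_\iota>j}\pi_{q_\iota}-\sum_{\iota\in A_j:\,q_\iota>j}\pi_{q_\iota}\Big)\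 \ge\ \frac1m\Big(h_{t_{a_j+1}}-h_j-\sum_{\iota\in L:\,t_\iota<j}\delta_{t_\iota}-[j\in\{q_1,\dots,q_v\}]\,\phi_j-\sum_{\iota\in A_j:\,q_\iota>j}\phi_{q_\iota}\Big),$$ where $[j\in\{q_1,\dots,q_v\}]$ is $1$ if $j$ equals some $q_\iota$ and $0$ otherwise, and $\phi_j$ denotes $\phi_{q_\iota}$ for the $\iota$ with $q_\iota=j$. Then the BL&P inequality $$z+\sum_{\iota=1}^l(h_{t_\iota}-h_{t_{\iota+1}}+\delta_{t_\iota})\,x_{t_\iota}+\sum_{\iota=1}^v\phi_{q_\iota}(1-x_{q_\iota})\ \ge\ h_{t_1}$$ is valid for $\operatorname{proj}_{(z,x)}\operatorname{conv}(\mathcal S_c)$, that is, it holds for every $(z,x)$ such that $(z,x;y)\in\operatorname{conv}(\mathcal S_c)$ for some $y\in\mathbb R^m$, and it is valid for $\operatorname{conv}(\mathcal F_c)$, that is, it holds for every $(z,x)\in\operatorname{conv}(\mathcal F_c)$. -/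

import Mathlib

/-!
Index convention: the index set `M = {1, …, m}` is represented by `Fin m`, so that the element
`i : Fin m` stands for the index `i.val + 1`.
-/

/-- The mixing set with a knapsack constraint: `z ≥ 0`, `x ∈ {0,1}^m`, `x_i = 0` implies
`z ≥ h_i`, and `∑ π_i x_i ≤ ε`. -/
def mixingKnapsackSet {m : ℕ} (h π : Fin m → ℝ) (ε : ℝ) : Set (ℝ × (Fin m → ℝ)) :=
  {w | 0 ≤ w.1 ∧ (∀ i, w.2 i = 0 ∨ w.2 i = 1) ∧ (∀ i, w.2 i = 0 → h i ≤ w.1) ∧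
    ∑ i, π i * w.2 i ≤ ε}

/-- The set `Ξ_c`: `z ≥ 0`, `0 ≤ x ≤ 1`, and `∑ π_i x_i ≤ ε`. -/
def relaxedKnapsackSet {m : ℕ} (π : Fin m → ℝ) (ε : ℝ) : Set (ℝ × (Fin m → ℝ)) :=
  {w | 0 ≤ w.1 ∧ (∀ i, 0 ≤ w.2 i) ∧ (∀ i, w.2 i ≤ 1) ∧ ∑ i, π i * w.2 i ≤ ε}

/-- The set `Δ_m` of vectors with nonnegative integer entries whose sum is at most one. -/
def integerSimplex (m : ℕ) : Set (Fin m → ℝ) :=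
  {y | (∀ i, ∃ n : ℕ, y i = n) ∧ ∑ i, y i ≤ 1}

/-- The bilinear set `S_c` of all `((z, x), y) ∈ Ξ_c × Δ_m` that satisfy the five families of
bilinear constraints. -/
def bilinearMixingSet {m : ℕ} (h π : Fin m → ℝ) (ε : ℝ) :
    Set ((ℝ × (Fin m → ℝ)) × (Fin m → ℝ)) :=
  {w | w.1 ∈ relaxedKnapsackSet π ε ∧ w.2 ∈ integerSimplex m ∧
    (∀ i, 0 ≤ (1 - w.1.2 i) * (1 - ∑ k, w.2 k)) ∧
    (∀ i, 0 ≤ -((1 - w.1.2 i) * (1 - ∑ k, w.2 k))) ∧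
    (∀ i, 0 ≤ w.1.1 * w.2 i - h i * w.2 i) ∧
    (∀ i, 0 ≤ -(w.1.2 i * w.2 i)) ∧
    (∀ i j, i < j → 0 ≤ -((1 - w.1.2 i) * w.2 j))}

/-- The number `a_j` of indices `ι ∈ {1, …, l}` with `t_ι < j`. Here `t : Fin (l + 1) → Fin m`
lists `t_1, …, t_l, t_{l+1}`; only the first `l` entries are counted. -/
def countBelow {m l : ℕ} (t : Fin (l + 1) → Fin m) (j : Fin m) : ℕ :=
  (Finset.univ.filter fun ι : Fin l => t ι.castSucc < j).card

theorem countBelow_lt {m l : ℕ} (t : Fin (l + 1) → Fin m) (j : Fin m) :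
    countBelow t j < l + 1 :=
  Nat.lt_succ_of_le ((Finset.card_filter_le _ _).trans (by simp))

/-- The BL&P inequality
`z + ∑_ι (h_{t_ι} - h_{t_{ι+1}} + δ_{t_ι}) x_{t_ι} + ∑_ι φ_{q_ι} (1 - x_{q_ι}) ≥ h_{t_1}`
at the point `w = (z, x)`; `δ ι` stands for `δ_{t_ι}` and `φ ι` for `φ_{q_ι}`. -/
def BLPInequality {m l v : ℕ} (h : Fin m → ℝ) (t : Fin (l + 1) → Fin m) (δ : Fin l → ℝ)
    (q : Fin v → Fin m) (φ : Fin v → ℝ) (w : ℝ × (Fin m → ℝ)) : Prop :=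
  w.1 + (∑ ι : Fin l, (h (t ι.castSucc) - h (t ι.succ) + δ ι) * w.2 (t ι.castSucc))
    + (∑ ι : Fin v, φ ι * (1 - w.2 (q ι))) ≥ h (t 0)

/-- A lower set of `Fin l` with `a` elements consists of the indices of value less than `a`. -/
theorem Fin.mem_iff_val_lt_card_of_isLowerSet {l : ℕ} {s : Finset (Fin l)}
    (hs : IsLowerSet (s : Set (Fin l))) (i : Fin l) : i ∈ s ↔ i.val < s.card := by
  constructor
  · intro hi
    have hsub : Finset.Iic i ⊆ s := fun k hk => hs (Finset.mem_Iic.1 hk) hi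
    have := Finset.card_le_card hsub
    rw [Fin.card_Iic] at this
    omega
  · intro hi
    by_contra hn
    have hsub : s ⊆ Finset.Iio i := fun k hk =>
      Finset.mem_Iio.2 (lt_of_not_ge fun hik => hn (hs hik hk))
    have := Finset.card_le_card hsub
    rw [Fin.card_Iio] at this
    omega

theorem Fin.sum_filter_val_lt_sub {l : ℕ} (g : Fin (l + 1) → ℝ) (a : ℕ) (ha : a < l + 1) :
    ∑ ι ∈ Finset.univ.filter (fun ι : Fin l => ι.val < a), (g ι.castSucc - g ι.succ)
      = g 0 - g ⟨a, ha⟩ := by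
  induction a with
  | zero => simp
  | succ a ih =>
    have hset : Finset.univ.filter (fun ι : Fin l => ι.val < a + 1)
        = insert ⟨a, by omega⟩ (Finset.univ.filter (fun ι : Fin l => ι.val < a)) := by
      ext ι
      simp only [Finset.mem_filter, Finset.mem_univ, true_and, Finset.mem_insert, Fin.ext_iff]
      omega
    rw [hset, Finset.sum_insert (by simp), ih (by omega)]
    simp only [Fin.castSucc_mk, Fin.succ_mk]
    ring

theorem sum_filter_castSucc_lt_sub {m l : ℕ} {t : Fin (l + 1) → Fin m} (ht : StrictMono t)
    (g : Fin m → ℝ) (j : Fin m) :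
    ∑ ι ∈ Finset.univ.filter (fun ι : Fin l => t ι.castSucc < j),
        (g (t ι.castSucc) - g (t ι.succ))
      = g (t 0) - g (t ⟨countBelow t j, countBelow_lt t j⟩) := by
  rw [← Fin.sum_filter_val_lt_sub (fun i => g (t i)) _ (countBelow_lt t j)]
  refine Finset.sum_congr ?_ fun _ _ => rfl
  have hs : IsLowerSet
      ((Finset.univ.filter fun ι : Fin l => t ι.castSucc < j : Finset (Fin l)) : Set (Fin l)) := by
    intro a b hba ha
    simp only [Finset.coe_filter, Finset.mem_univ, true_and, Set.mem_ofPred_eq] at ha ⊢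
    exact (ht.monotone (Fin.castSucc_le_castSucc_iff.2 hba)).trans_lt ha
  ext ι
  rw [Fin.mem_iff_val_lt_card_of_isLowerSet hs, Finset.mem_filter]
  exact ⟨fun hι => ⟨Finset.mem_univ _, hι⟩, fun hι => hι.2⟩

/-- The knapsack constraint at a point whose coordinates before `j` are one, restricted to the
coordinates before `j` and to the list `q` after `j`. -/
theorem sum_Iio_add_sum_le_of_knapsack {m v : ℕ} {π x : Fin m → ℝ} {ε : ℝ}
    (hπ : ∀ i, 0 ≤ π i) (hx0 : ∀ i, 0 ≤ x i) (hk : ∑ i, π i * x i ≤ ε)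
    {q : Fin v → Fin m} (hq : Function.Injective q) {j : Fin m} (hx1 : ∀ i < j, x i = 1) :
    ∑ i ∈ Finset.Iio j, π i
      + ∑ ι ∈ Finset.univ.filter (fun ι => j < q ι), π (q ι) * x (q ι) ≤ ε := by
  refine le_trans ?_ hk
  have himg : ∑ ι ∈ Finset.univ.filter (fun ι => j < q ι), π (q ι) * x (q ι)
      = ∑ i ∈ (Finset.univ.filter (fun ι => j < q ι)).image q, π i * x i :=
    (Finset.sum_image (f := fun i => π i * x i) hq.injOn).symm
  have hlow : ∑ i ∈ Finset.Iio j, π i = ∑ i ∈ Finset.Iio j, π i * x i :=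
    Finset.sum_congr rfl fun i hi => by rw [hx1 i (Finset.mem_Iio.1 hi), mul_one]
  have hdisj : Disjoint (Finset.Iio j) ((Finset.univ.filter (fun ι => j < q ι)).image q) := by
    rw [Finset.disjoint_left]
    intro i hi hi'
    obtain ⟨ι, hι, rfl⟩ := Finset.mem_image.1 hi'
    exact lt_asymm (Finset.mem_Iio.1 hi) (Finset.mem_filter.1 hι).2
  rw [himg, hlow, ← Finset.sum_union hdisj]
  exact Finset.sum_le_sum_of_subset_of_nonneg (Finset.subset_univ _)
    fun i _ _ => mul_nonneg (hπ i) (hx0 i)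

theorem convex_setOf_BLPInequality {m l v : ℕ} (h : Fin m → ℝ) (t : Fin (l + 1) → Fin m)
    (δ : Fin l → ℝ) (q : Fin v → Fin m) (φ : Fin v → ℝ) :
    Convex ℝ {w | BLPInequality h t δ q φ w} := by
  intro w hw u hu a b ha hb hab
  simp only [Set.mem_ofPred_eq, BLPInequality, ge_iff_le] at hw hu ⊢
  have hx : ∑ ι : Fin l, (h (t ι.castSucc) - h (t ι.succ) + δ ι)
        * (a • w + b • u).2 (t ι.castSucc)
      = a * ∑ ι : Fin l, (h (t ι.castSucc) - h (t ι.succ) + δ ι) * w.2 (t ι.castSucc)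
        + b * ∑ ι : Fin l, (h (t ι.castSucc) - h (t ι.succ) + δ ι) * u.2 (t ι.castSucc) := by
    rw [Finset.mul_sum, Finset.mul_sum, ← Finset.sum_add_distrib]
    refine Finset.sum_congr rfl fun ι _ => ?_
    simp only [Prod.snd_add, Prod.smul_snd, Pi.add_apply, Pi.smul_apply, smul_eq_mul]
    ring
  have hφ : ∑ ι : Fin v, φ ι * (1 - (a • w + b • u).2 (q ι))
      = a * ∑ ι : Fin v, φ ι * (1 - w.2 (q ι)) + b * ∑ ι : Fin v, φ ι * (1 - u.2 (q ι)) := by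
    rw [Finset.mul_sum, Finset.mul_sum, ← Finset.sum_add_distrib]
    refine Finset.sum_congr rfl fun ι _ => ?_
    simp only [Prod.snd_add, Prod.smul_snd, Pi.add_apply, Pi.smul_apply, smul_eq_mul]
    linear_combination (-φ ι) * hab
  rw [hx, hφ]
  simp only [Prod.fst_add, Prod.smul_fst, smul_eq_mul]
  have h1 := mul_le_mul_of_nonneg_left hw ha
  have h2 := mul_le_mul_of_nonneg_left hu hb
  have h3 : h (t 0) = a * h (t 0) + b * h (t 0) := by rw [← add_mul, hab, one_mul]
  linarith

/-- Lower bound on the part of the inequality that belongs to the list `t`. -/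
theorem le_sum_mul_of_eq_one_of_lt {m l : ℕ} {h : Fin m → ℝ} {t : Fin (l + 1) → Fin m}
    (ht : StrictMono t) {δ : Fin l → ℝ}
    (hδlb : ∀ ι : Fin l, δ ι ≥ h (t ι.succ) - h (t ι.castSucc))
    {x : Fin m → ℝ} (hx0 : ∀ i, 0 ≤ x i) {j : Fin m} (hx1 : ∀ i < j, x i = 1) :
    h (t 0) - h (t ⟨countBelow t j, countBelow_lt t j⟩)
        + ∑ ι ∈ Finset.univ.filter (fun ι : Fin l => t ι.castSucc < j), δ ι
      ≤ ∑ ι : Fin l, (h (t ι.castSucc) - h (t ι.succ) + δ ι) * x (t ι.castSucc) := by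
  rw [← sum_filter_castSucc_lt_sub ht h j, ← Finset.sum_add_distrib]
  calc _ = ∑ ι ∈ Finset.univ.filter (fun ι : Fin l => t ι.castSucc < j),
        (h (t ι.castSucc) - h (t ι.succ) + δ ι) * x (t ι.castSucc) :=
        Finset.sum_congr rfl fun ι hι => by rw [hx1 _ (Finset.mem_filter.1 hι).2, mul_one]
    _ ≤ _ := Finset.sum_le_sum_of_subset_of_nonneg (Finset.subset_univ _) fun ι _ _ =>
        mul_nonneg (by linarith [hδlb ι]) (hx0 _)

/-- Lower bound on the part of the inequality that belongs to the list `q`. -/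
theorem sum_eq_add_sum_lt_le {m v : ℕ} {q : Fin v → Fin m} {φ : Fin v → ℝ} (hφ : ∀ ι, 0 ≤ φ ι)
    {x : Fin m → ℝ} (hx : ∀ i, x i ≤ 1) {j : Fin m} (hxj : x j = 0) :
    ∑ ι ∈ Finset.univ.filter (fun ι => q ι = j), φ ι
        + ∑ ι ∈ Finset.univ.filter (fun ι => j < q ι), φ ι * (1 - x (q ι))
      ≤ ∑ ι, φ ι * (1 - x (q ι)) := by
  have heq : ∑ ι ∈ Finset.univ.filter (fun ι => q ι = j), φ ι
      = ∑ ι ∈ Finset.univ.filter (fun ι => q ι = j), φ ι * (1 - x (q ι)) :=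
    Finset.sum_congr rfl fun ι hι => by rw [(Finset.mem_filter.1 hι).2, hxj, sub_zero, mul_one]
  have hdisj : Disjoint (Finset.univ.filter (fun ι => q ι = j))
      (Finset.univ.filter (fun ι => j < q ι)) := by
    rw [Finset.disjoint_filter]
    exact fun ι _ hι => not_lt_of_ge hι.le
  rw [heq, ← Finset.sum_union hdisj]
  exact Finset.sum_le_sum_of_subset_of_nonneg (Finset.subset_univ _) fun ι _ _ =>
    mul_nonneg (hφ ι) (sub_nonneg.2 (hx _))

/-- Weak duality for the continuous knapsack problem in the coordinates of `s`: the multiplier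
`b` of the knapsack constraint bounds the cost from below. -/
theorem add_mul_sub_le_sum_mul_one_sub {ι : Type*} [DecidableEq ι] {s A : Finset ι} (hAs : A ⊆ s)
    {c φ x : ι → ℝ} {b d : ℝ} (hb : 0 ≤ b)
    (hx0 : ∀ i ∈ s, 0 ≤ x i) (hx1 : ∀ i ∈ s, x i ≤ 1)
    (hA : ∀ i ∈ A, φ i ≤ c i * b) (hAc : ∀ i ∈ s, i ∉ A → c i * b ≤ φ i)
    (hk : d + ∑ i ∈ s, c i * x i ≤ 0) :
    ∑ i ∈ A, φ i + b * (d + ∑ i ∈ s, c i - ∑ i ∈ A, c i) ≤ ∑ i ∈ s, φ i * (1 - x i) := by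
  have hsplit : ∀ f : ι → ℝ, ∑ i ∈ s, f i = ∑ i ∈ s \ A, f i + ∑ i ∈ A, f i := fun f =>
    (Finset.sum_sdiff hAs).symm
  have hin : ∑ i ∈ A, φ i - b * ∑ i ∈ A, c i * x i ≤ ∑ i ∈ A, φ i * (1 - x i) := by
    rw [Finset.mul_sum, ← Finset.sum_sub_distrib]
    refine Finset.sum_le_sum fun i hi => ?_
    nlinarith [mul_le_mul_of_nonneg_right (hA i hi) (hx0 i (hAs hi))]
  have hout : b * ∑ i ∈ s \ A, c i - b * ∑ i ∈ s \ A, c i * x i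
      ≤ ∑ i ∈ s \ A, φ i * (1 - x i) := by
    rw [Finset.mul_sum, Finset.mul_sum, ← Finset.sum_sub_distrib]
    refine Finset.sum_le_sum fun i hi => ?_
    obtain ⟨his, hiA⟩ := Finset.mem_sdiff.1 hi
    nlinarith [mul_le_mul_of_nonneg_right (hAc i his hiA) (sub_nonneg.2 (hx1 i his))]
  have hbk := mul_nonpos_of_nonneg_of_nonpos hb hk
  rw [hsplit] at hbk
  rw [hsplit (fun i => φ i * (1 - x i)), hsplit c]
  linarith

/-- The inequality holds at every point whose first coordinate different from one, in position
`j`, vanishes. -/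
theorem BLPInequality_of_first_zero {m l v : ℕ} {h π : Fin m → ℝ} {ε : ℝ}
    (hπpos : ∀ i, 0 < π i) {t : Fin (l + 1) → Fin m} (ht : StrictMono t) {δ : Fin l → ℝ}
    (hδlb : ∀ ι : Fin l, δ ι ≥ h (t ι.succ) - h (t ι.castSucc))
    {q : Fin v → Fin m} (hq : StrictMono q) {φ : Fin v → ℝ} (hφ : ∀ ι, 0 ≤ φ ι)
    {j : Fin m} {A : Finset (Fin v)} {β : ℝ} (hβ : 0 ≤ β)
    (hA : ∀ ι ∈ A, j < q ι → φ ι ≤ (m : ℝ) * π (q ι) * β)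
    (hAc : ∀ ι ∉ A, j < q ι → (m : ℝ) * π (q ι) * β ≤ φ ι)
    (hβh : β * ((∑ i ∈ Finset.Iic j, π i) - π j - ε
          + (∑ ι ∈ Finset.univ.filter (fun ι => j < q ι), π (q ι))
          - (∑ ι ∈ A.filter (fun ι => j < q ι), π (q ι)))
        ≥ (h (t ⟨countBelow t j, countBelow_lt t j⟩) - h j
          - (∑ ι ∈ Finset.univ.filter (fun ι : Fin l => t ι.castSucc < j), δ ι)
          - (∑ ι ∈ Finset.univ.filter (fun ι => q ι = j), φ ι)
          - (∑ ι ∈ A.filter (fun ι => j < q ι), φ ι)) / (m : ℝ))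
    {w : ℝ × (Fin m → ℝ)} (hw : w ∈ relaxedKnapsackSet π ε) (hz : h j ≤ w.1)
    (hxj : w.2 j = 0) (hx1 : ∀ i < j, w.2 i = 1) :
    BLPInequality h t δ q φ w := by
  obtain ⟨-, hx0, hxle, hk⟩ := hw
  have hm : (0 : ℝ) < m := by exact_mod_cast j.pos
  have hIic : ∑ i ∈ Finset.Iic j, π i = ∑ i ∈ Finset.Iio j, π i + π j := by
    rw [← Finset.Iio_insert, Finset.sum_insert (by simp), add_comm]
  have hknap := sum_Iio_add_sum_le_of_knapsack (fun i => (hπpos i).le) hx0 hk hq.injective hx1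
  have hdual := add_mul_sub_le_sum_mul_one_sub
    (s := Finset.univ.filter (fun ι => j < q ι)) (A := A.filter (fun ι => j < q ι))
    (Finset.filter_subset_filter _ (Finset.subset_univ _))
    (c := fun ι => π (q ι)) (φ := φ) (x := fun ι => w.2 (q ι)) (b := m * β)
    (d := ∑ i ∈ Finset.Iio j, π i - ε) (by positivity)
    (fun ι _ => hx0 _) (fun ι _ => hxle _)
    (fun ι hι => by
      have := hA ι (Finset.mem_filter.1 hι).1 (Finset.mem_filter.1 hι).2
      linarith)
    (fun ι hι hιA => by
      have hlt := (Finset.mem_filter.1 hι).2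
      have := hAc ι (fun hmem => hιA (Finset.mem_filter.2 ⟨hmem, hlt⟩)) hlt
      linarith)
    (by linarith)
  rw [ge_iff_le, div_le_iff₀ hm, hIic] at hβh
  have ht' := le_sum_mul_of_eq_one_of_lt ht hδlb hx0 hx1
  have hq' := sum_eq_add_sum_lt_le (q := q) hφ hxle hxj
  unfold BLPInequality
  linarith

/-- Some coordinate of a point of the relaxed knapsack set is not one. -/
theorem exists_ne_one_of_mem_relaxedKnapsackSet {m : ℕ} {π : Fin m → ℝ} {ε : ℝ}
    (hπsum : ∑ i, π i = 1) (hε1 : ε < 1) {w : ℝ × (Fin m → ℝ)}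
    (hw : w ∈ relaxedKnapsackSet π ε) : ∃ i, w.2 i ≠ 1 := by
  by_contra! hall
  have hk := hw.2.2.2
  simp only [hall, mul_one, hπsum] at hk
  linarith

theorem mixingKnapsackSet_subset_relaxedKnapsackSet {m : ℕ} (h π : Fin m → ℝ) (ε : ℝ) :
    mixingKnapsackSet h π ε ⊆ relaxedKnapsackSet π ε := by
  rintro w ⟨hz, hx, -, hk⟩
  refine ⟨hz, fun i => ?_, fun i => ?_, hk⟩ <;> rcases hx i with hi | hi <;> simp [hi]

theorem exists_first_zero_of_mem_mixingKnapsackSet {m : ℕ} {h π : Fin m → ℝ} {ε : ℝ}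
    (hπsum : ∑ i, π i = 1) (hε1 : ε < 1) {w : ℝ × (Fin m → ℝ)}
    (hw : w ∈ mixingKnapsackSet h π ε) :
    ∃ j, h j ≤ w.1 ∧ w.2 j = 0 ∧ ∀ i < j, w.2 i = 1 := by
  obtain ⟨j, hj, hmin⟩ := WellFounded.has_min (wellFounded_lt (α := Fin m)) {i | w.2 i ≠ 1}
    (exists_ne_one_of_mem_relaxedKnapsackSet hπsum hε1
      (mixingKnapsackSet_subset_relaxedKnapsackSet h π ε hw))
  have hj0 : w.2 j = 0 := (hw.2.1 j).resolve_right hj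
  exact ⟨j, hw.2.2.1 j hj0, hj0, fun i hi => by_contra fun hne => hmin i hne hi⟩

theorem exists_first_zero_of_mem_bilinearMixingSet {m : ℕ} {h π : Fin m → ℝ} {ε : ℝ}
    (hπsum : ∑ i, π i = 1) (hε1 : ε < 1) {w : (ℝ × (Fin m → ℝ)) × (Fin m → ℝ)}
    (hw : w ∈ bilinearMixingSet h π ε) :
    ∃ j, h j ≤ w.1.1 ∧ w.1.2 j = 0 ∧ ∀ i < j, w.1.2 i = 1 := by
  obtain ⟨hrel, hy, hone, hone', hz, hx, hlt⟩ := hw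
  obtain ⟨i, hi⟩ := exists_ne_one_of_mem_relaxedKnapsackSet hπsum hε1 hrel
  have hysum : ∑ k, w.2 k = 1 := by
    have hmul := le_antisymm (neg_nonneg.1 (hone' i)) (hone i)
    rcases mul_eq_zero.1 hmul with h0 | h0
    · exact absurd (sub_eq_zero.1 h0).symm hi
    · linarith
  obtain ⟨j, -, hj⟩ : ∃ j ∈ Finset.univ, w.2 j ≠ 0 :=
    Finset.exists_ne_zero_of_sum_ne_zero (by rw [hysum]; exact one_ne_zero)
  have hjpos : 0 < w.2 j := by
    obtain ⟨n, hn⟩ := hy.1 j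
    exact lt_of_le_of_ne (by rw [hn]; positivity) hj.symm
  refine ⟨j, ?_, ?_, fun i hij => ?_⟩
  · have := hz j
    rw [← sub_mul] at this
    linarith [nonneg_of_mul_nonneg_left this hjpos]
  · refine le_antisymm ?_ (hrel.2.1 j)
    have := hx j
    rw [← neg_mul] at this
    linarith [nonneg_of_mul_nonneg_left this hjpos]
  · refine le_antisymm (hrel.2.2.1 i) ?_
    have := hlt i j hij
    rw [← neg_mul] at this
    linarith [nonneg_of_mul_nonneg_left this hjpos]

/-- The list `t` has `l + 1` entries `t_1 < … < t_l < t_{l+1}` with `t_{l+1} = r + 1`, which is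
the element of `Fin m` of value `r`; so `t_l ≤ r`. The condition `r ≤ (q ι).val` says
`q_ι ≥ r + 1`. The term `[j ∈ Q] φ_j` is the sum of `φ ι` over the (at most one) `ι` with
`q ι = j`. -/
theorem blp_inequality_valid_general
    (m : ℕ) (hm : 1 ≤ m)
    (h : Fin m → ℝ) (hmono : Antitone h) (hnonneg : ∀ i, 0 ≤ h i)
    (π : Fin m → ℝ) (hπpos : ∀ i, 0 < π i) (hπsum : ∑ i, π i = 1)
    (ε : ℝ) (hε0 : 0 ≤ ε) (hε1 : ε < 1) (hπε : ∀ i, π i ≤ ε)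
    (p : ℕ)
    (hp : IsGreatest {k : ℕ | 1 ≤ k ∧ k ≤ m ∧
      ∑ i ∈ Finset.univ.filter (fun i : Fin m => i.val < k), π i ≤ ε} p)
    (r : ℕ) (hr1 : 1 ≤ r) (hrp : r ≤ p)
    (l : ℕ) (hl1 : 1 ≤ l) (hlr : l ≤ r)
    (t : Fin (l + 1) → Fin m) (ht : StrictMono t) (htop : (t (Fin.last l)).val = r)
    (δ : Fin l → ℝ)
    (hδlb : ∀ ι : Fin l, δ ι ≥ h (t ι.succ) - h (t ι.castSucc))
    (hδub : ∑ ι, δ ι ≤ h (t (Fin.last l)))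
    (v : ℕ) (hv1 : 1 ≤ v) (hvub : v ≤ p - r + l)
    (q : Fin v → Fin m) (hq : StrictMono q) (hqr : ∀ ι, r ≤ (q ι).val)
    (A : Fin m → Finset (Fin v))
    (φ : Fin v → ℝ) (hφ : ∀ ι, 0 ≤ φ ι)
    (β : Fin m → ℝ) (hβ : ∀ j, 0 ≤ β j)
    (hA : ∀ j, ∀ ι ∈ A j, j < q ι → φ ι ≤ (m : ℝ) * π (q ι) * β j)
    (hAc : ∀ j, ∀ ι ∉ A j, j < q ι → (m : ℝ) * π (q ι) * β j ≤ φ ι)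
    (hβh : ∀ j : Fin m,
      β j * ((∑ i ∈ Finset.Iic j, π i) - π j - ε
          + (∑ ι ∈ Finset.univ.filter (fun ι => j < q ι), π (q ι))
          - (∑ ι ∈ (A j).filter (fun ι => j < q ι), π (q ι)))
        ≥ (h (t ⟨countBelow t j, countBelow_lt t j⟩) - h j
          - (∑ ι ∈ Finset.univ.filter (fun ι : Fin l => t ι.castSucc < j), δ ι)
          - (∑ ι ∈ Finset.univ.filter (fun ι => q ι = j), φ ι)
          - (∑ ι ∈ (A j).filter (fun ι => j < q ι), φ ι)) / (m : ℝ)) :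
    (∀ w ∈ Prod.fst '' convexHull ℝ (bilinearMixingSet h π ε), BLPInequality h t δ q φ w) ∧
      (∀ w ∈ convexHull ℝ (mixingKnapsackSet h π ε), BLPInequality h t δ q φ w) := by
  constructor
  · rintro _ ⟨u, hu, rfl⟩
    refine convexHull_min ?_ ((convex_setOf_BLPInequality h t δ q φ).linear_preimage
      (LinearMap.fst ℝ (ℝ × (Fin m → ℝ)) (Fin m → ℝ))) hu
    intro w hw
    obtain ⟨j, hz, hxj, hx1⟩ := exists_first_zero_of_mem_bilinearMixingSet hπsum hε1 hw
    exact BLPInequality_of_first_zero hπpos ht hδlb hq hφ (hβ j) (hA j) (hAc j) (hβh j)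
      hw.1 hz hxj hx1
  · intro u hu
    refine convexHull_min ?_ (convex_setOf_BLPInequality h t δ q φ) hu
    intro w hw
    obtain ⟨j, hz, hxj, hx1⟩ := exists_first_zero_of_mem_mixingKnapsackSet hπsum hε1 hw
    exact BLPInequality_of_first_zero hπpos ht hδlb hq hφ (hβ j) (hA j) (hAc j) (hβh j)
      (mixingKnapsackSet_subset_relaxedKnapsackSet h π ε hw) hz hxj hx1
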